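/- arXiv:2603.11374 — 2 statements merged into one kernel-verified Lean document; each statement's English description precedes it below -/
import Mathlib

section
/- For n ≥ 1, N ≥ 1 and a partition λ of n with at most N parts, the dimension of the irreducible U(N)-representation with highest weight λ equals (1/n!)·∑_{σ ∈ S_n} χ^λ(σ)·N^{#σ}, where χ^λ is the irreducible character of S_n indexed by λ and #σ the number of cycles of σ. -/
open MvPolynomial

theorem aux_quot_prod {α : Type*} [Fintype α] [DecidableEq α] (σ : Equiv.Perm α)
    {R : Type*} [CommSemiring R] (g : ℕ → R)
    [Fintype (Quotient (Equiv.Perm.SameCycle.setoid σ))]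
    [DecidableEq (Quotient (Equiv.Perm.SameCycle.setoid σ))] :
    ∏ q : Quotient (Equiv.Perm.SameCycle.setoid σ),
      g (Finset.univ.filter fun a => (Quotient.mk (Equiv.Perm.SameCycle.setoid σ) a) = q).card =
    ((σ.cycleType + Multiset.replicate (Fintype.card α - σ.cycleType.sum) 1).map g).prod := by
  classical
  have hmk : ∀ a b, (Quotient.mk (Equiv.Perm.SameCycle.setoid σ) a) =
      (Quotient.mk (Equiv.Perm.SameCycle.setoid σ) b) ↔ σ.SameCycle a b := fun a b =>
    Quotient.eq (r := Equiv.Perm.SameCycle.setoid σ)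
  have hsup : ∀ a, σ a ≠ a → ∀ b, b ∈ (σ.cycleOf a).support ↔ σ.SameCycle b a := by
    intro a ha b
    rw [Equiv.Perm.mem_support_cycleOf_iff' ha, Equiv.Perm.sameCycle_comm]
  rw [Multiset.map_add, Multiset.prod_add, Multiset.map_replicate, Multiset.prod_replicate]
  rw [← Finset.prod_filter_mul_prod_filter_not (s := Finset.univ)
    (p := fun q => ∃ a, σ a ≠ a ∧ Quotient.mk (Equiv.Perm.SameCycle.setoid σ) a = q)]
  congr 1
  · rw [Equiv.Perm.cycleType_def, Multiset.map_map]
    change _ = ∏ c ∈ σ.cycleFactorsFinset, _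
    symm
    refine Finset.prod_bij (fun c hc => Quotient.mk (Equiv.Perm.SameCycle.setoid σ)
      ((Equiv.Perm.mem_cycleFactorsFinset_iff.1 hc).1.nonempty_support.choose)) ?_ ?_ ?_ ?_
    · intro c hc
      have h := (Equiv.Perm.mem_cycleFactorsFinset_iff.1 hc).1.nonempty_support.choose_spec
      simp only [Finset.mem_filter, Finset.mem_univ, true_and]
      exact ⟨_, by simpa using Equiv.Perm.mem_cycleFactorsFinset_support_le hc h, rfl⟩
    · intro c hc d hd hcd
      have h1 := (Equiv.Perm.mem_cycleFactorsFinset_iff.1 hc).1.nonempty_support.choose_spec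
      have h2 := (Equiv.Perm.mem_cycleFactorsFinset_iff.1 hd).1.nonempty_support.choose_spec
      rw [hmk] at hcd
      rw [Equiv.Perm.cycle_is_cycleOf h1 hc, Equiv.Perm.cycle_is_cycleOf h2 hd]
      exact hcd.cycleOf_eq
    · intro q hq
      simp only [Finset.mem_filter, Finset.mem_univ, true_and] at hq
      obtain ⟨a, ha, rfl⟩ := hq
      have hm : σ.cycleOf a ∈ σ.cycleFactorsFinset :=
        Equiv.Perm.cycleOf_mem_cycleFactorsFinset_iff.2 (by simpa using ha)
      refine ⟨σ.cycleOf a, hm, ?_⟩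
      have h1 := (Equiv.Perm.mem_cycleFactorsFinset_iff.1 hm).1.nonempty_support.choose_spec
      rw [hmk]
      exact (hsup a ha _).1 h1
    · intro c hc
      have h := (Equiv.Perm.mem_cycleFactorsFinset_iff.1 hc).1.nonempty_support.choose_spec
      generalize_proofs pf at h ⊢
      have ha : σ pf.choose ≠ pf.choose := by
        simpa using Equiv.Perm.mem_cycleFactorsFinset_support_le hc h
      simp only [Function.comp]
      generalize pf.choose = a at h ha ⊢
      congr 2
      ext b
      rw [Equiv.Perm.cycle_is_cycleOf h hc, hsup _ ha]
      simp [hmk]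
  · rw [Equiv.Perm.sum_cycleType, ← Finset.card_compl, ← Finset.prod_const]
    symm
    refine Finset.prod_bij (fun a _ => Quotient.mk (Equiv.Perm.SameCycle.setoid σ) a) ?_ ?_ ?_ ?_
    · intro a ha
      simp only [Finset.mem_compl, Equiv.Perm.mem_support, not_not] at ha
      simp only [Finset.mem_filter, Finset.mem_univ, true_and, hmk]
      rintro ⟨b, hb, hba⟩
      exact hb (hba.apply_eq_self_iff.2 ha)
    · intro a ha b hb h
      simp only [Finset.mem_compl, Equiv.Perm.mem_support, not_not] at ha
      rw [hmk] at h
      exact h.eq_of_left ha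
    · intro q hq
      induction q using Quotient.inductionOn with | h a => ?_
      refine ⟨a, ?_, rfl⟩
      simp only [Finset.mem_filter, Finset.mem_univ, true_and, hmk] at hq
      simp only [Finset.mem_compl, Equiv.Perm.mem_support]
      intro h
      exact hq ⟨a, h, Equiv.Perm.SameCycle.refl _ _⟩
    · intro a ha
      simp only [Finset.mem_compl, Equiv.Perm.mem_support, not_not] at ha
      have : (Finset.univ.filter fun b => (Quotient.mk (Equiv.Perm.SameCycle.setoid σ) b) =
        Quotient.mk (Equiv.Perm.SameCycle.setoid σ) a) = {a} := by
        ext b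
        simp only [Finset.mem_filter, Finset.mem_univ, true_and, hmk, Finset.mem_singleton]
        exact ⟨fun h => (h.symm.eq_of_left ha).symm, fun h => h ▸ Equiv.Perm.SameCycle.refl _ _⟩
      rw [this]; simp

theorem aux_fixed_sum {α Y : Type*} [Fintype α] [DecidableEq α] [Fintype Y] [DecidableEq Y]
    (σ : Equiv.Perm α) {R : Type*} [CommSemiring R] (y : Y → R) :
    ((σ.cycleType + Multiset.replicate (Fintype.card α - σ.cycleType.sum) 1).map
      (fun k => ∑ i, y i ^ k)).prod =
    ∑ f : α → Y with f ∘ σ = f, ∏ a, y (f a) := by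
  classical
  rw [← aux_quot_prod σ (fun k => ∑ i, y i ^ k), Finset.prod_univ_sum, Fintype.piFinset_univ]
  refine Finset.sum_bij (fun h _ => fun a => h (Quotient.mk _ a)) ?_ ?_ ?_ ?_
  · intro h _
    simp only [Finset.mem_filter, Finset.mem_univ, true_and]
    funext a
    simp only [Function.comp]
    congr 1
    exact Quotient.sound (s := Equiv.Perm.SameCycle.setoid σ)
      (Equiv.Perm.sameCycle_apply_left.2 (Equiv.Perm.SameCycle.refl _ _))
  · intro h _ h' _ hh
    funext q
    induction q using Quotient.inductionOn with | h a => exact congrFun hh a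
  · intro f hf
    simp only [Finset.mem_filter, Finset.mem_univ, true_and] at hf
    have hz : ∀ (n : ℤ) a, f ((σ ^ n) a) = f a := by
      intro n
      induction n using Int.induction_on with
      | zero => simp
      | succ i ih => intro a; rw [zpow_add_one, Equiv.Perm.mul_apply, ih]; exact congrFun hf a
      | pred i ih =>
        intro a; rw [zpow_sub_one, Equiv.Perm.mul_apply, ih]
        have := congrFun hf (σ⁻¹ a)
        simpa using this.symm
    refine ⟨fun q => Quotient.lift f ?_ q, Finset.mem_univ _, rfl⟩
    rintro a b ⟨n, rfl⟩
    exact (hz n a).symm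
  · intro h _
    rw [← Finset.prod_fiberwise (s := Finset.univ)
      (g := fun a => Quotient.mk (Equiv.Perm.SameCycle.setoid σ) a)]
    refine Finset.prod_congr rfl fun q _ => ?_
    rw [← Finset.prod_const]
    refine Finset.prod_congr rfl fun a ha => ?_
    rw [← (Finset.mem_filter.1 ha).2]

theorem aux_count {Y : Type*} [Fintype Y] [DecidableEq Y] (n : ℕ) (k : Y →₀ ℕ)
    (hk : ∑ i, k i = n) :
    (Finset.univ.filter fun f : Fin n → Y => ∑ a, Finsupp.single (f a) 1 = k).card =
      Nat.multinomial Finset.univ k := by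
  classical
  have h1 : (∑ i : Y, (X i : MvPolynomial Y ℕ)) ^ n =
      ∑ f : Fin n → Y, monomial (∑ a, Finsupp.single (f a) 1) 1 := by
    rw [← Fin.prod_const, Finset.prod_univ_sum, Fintype.piFinset_univ]
    refine Finset.sum_congr rfl fun f _ => ?_
    rw [monomial_sum_one]; rfl
  have h2 := congrArg (coeff k) h1
  rw [coeff_sum, Finset.sum_pow_eq_sum_piAntidiag, coeff_sum] at h2
  simp only [coeff_monomial] at h2
  rw [Finset.card_filter, ← h2]
  have h3 : ∀ m : Y → ℕ, (∏ i, (X i : MvPolynomial Y ℕ) ^ m i) =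
      monomial (Finsupp.equivFunOnFinite.symm m) 1 := by
    intro m
    rw [monomial_eq, Finsupp.prod_fintype _ _ (by simp)]
    simp
  simp only [h3, ← map_natCast (C : ℕ →+* MvPolynomial Y ℕ), coeff_C_mul, coeff_monomial]
  rw [Finset.sum_eq_single (k : Y → ℕ)]
  · simp
  · intro b _ hb
    rw [if_neg]; · simp
    rintro rfl; exact hb rfl
  · intro h; exact absurd (by simp [hk]) h

theorem aux_sum_perm {Y : Type*} [Fintype Y] [DecidableEq Y] (n : ℕ)
    {R : Type*} [CommSemiring R] (y : Y → R) :
    ∑ σ : Equiv.Perm (Fin n), ((σ.cycleType + Multiset.replicate (n - σ.cycleType.sum) 1).map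
      (fun k => ∑ i, y i ^ k)).prod =
    (n.factorial : R) * ∑ k ∈ Finset.finsuppAntidiag (Finset.univ : Finset Y) n,
      ∏ i, y i ^ k i := by
  classical
  have h0 := fun σ : Equiv.Perm (Fin n) => aux_fixed_sum σ y
  simp only [Fintype.card_fin] at h0
  simp only [h0]
  simp only [Finset.sum_filter]
  rw [Finset.sum_comm]
  have hcnt : ∀ (f : Fin n → Y) (i : Y), (∑ a, Finsupp.single (f a) 1 : Y →₀ ℕ) i =
      Fintype.card {a // f a = i} := by
    intro f i
    rw [Finsupp.finsetSum_apply, Fintype.card_subtype, Finset.card_filter]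
    simp [Finsupp.single_apply]
  have h1 : ∀ f : Fin n → Y, (∑ σ : Equiv.Perm (Fin n), if f ∘ σ = f then ∏ a, y (f a) else 0) =
      (fun k : Y →₀ ℕ => ((∏ i, (k i).factorial : ℕ) : R) * ∏ i, y i ^ k i)
        (∑ a, Finsupp.single (f a) 1) := by
    intro f
    simp only [hcnt]
    rw [← DomMulAct.stabilizer_card, ← Finset.sum_filter, Finset.sum_const, nsmul_eq_mul,
      Fintype.card_subtype]
    congr 1
    rw [← Finset.prod_fiberwise (s := Finset.univ) (g := f)]
    refine Finset.prod_congr rfl fun q _ => ?_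
    rw [Fintype.card_subtype, ← Finset.prod_const]
    refine Finset.prod_congr rfl fun a ha => ?_
    rw [(Finset.mem_filter.1 ha).2]
  simp only [h1]
  rw [← Finset.sum_fiberwise_of_maps_to (s := Finset.univ)
    (t := Finset.finsuppAntidiag (Finset.univ : Finset Y) n)
    (g := fun f : Fin n → Y => ∑ a, Finsupp.single (f a) 1), Finset.mul_sum]
  · refine Finset.sum_congr rfl fun k hk => ?_
    rw [Finset.sum_congr rfl (g := fun _ => ((∏ i, (k i).factorial : ℕ) : R) * ∏ i, y i ^ k i)]
    · have hk' : ∑ i, k i = n := by simpa using hk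
      rw [Finset.sum_const, aux_count n k hk', nsmul_eq_mul, ← mul_assoc, ← Nat.cast_mul,
        mul_comm (Nat.multinomial _ _), Nat.multinomial_spec, hk']
    · intro f hf
      rw [(Finset.mem_filter.1 hf).2]
  · intro f _
    simp only [Finset.mem_finsuppAntidiag, Finset.subset_univ, and_true]
    simp only [Finsupp.finsetSum_apply]
    rw [Finset.sum_comm]
    simp [Finsupp.single_apply]

theorem aux_h (M n : ℕ) {R : Type*} [CommRing R] (x : Fin (M+1) → R) :
    ∑ k ∈ Finset.finsuppAntidiag (Finset.univ : Finset (Fin (M+1) × Fin (M+1))) n,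
      ∏ i, x i.1 ^ k i =
    ∑ k ∈ Finset.finsuppAntidiag (Finset.univ : Finset (Fin (M+1))) n,
      ∏ i, ((Nat.choose (M + k i) M : ℕ) : R) * x i ^ k i := by
  have h1 := PowerSeries.coeff_prod (fun i : Fin (M+1) × Fin (M+1) =>
    (PowerSeries.mk fun k => x i.1 ^ k : PowerSeries R)) n Finset.univ
  have h2 := PowerSeries.coeff_prod (fun i : Fin (M+1) =>
    (PowerSeries.mk fun k => (Nat.choose (M + k) M : R) * x i ^ k : PowerSeries R)) n Finset.univ
  simp only [PowerSeries.coeff_mk] at h1 h2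
  rw [← h1, ← h2, Fintype.prod_prod_type]
  congr 1
  refine Finset.prod_congr rfl fun i _ => ?_
  simp only [Finset.prod_const, Finset.card_univ, Fintype.card_fin]
  have h3 := congrArg (PowerSeries.rescale (x i)) (PowerSeries.mk_one_pow_eq_mk_choose_add R M)
  rw [map_pow] at h3
  have h4 : PowerSeries.rescale (x i) (PowerSeries.mk 1) = PowerSeries.mk fun k => x i ^ k := by
    ext; simp
  rw [h4] at h3
  rw [h3]
  ext; simp [mul_comm]

theorem aux_det (M : ℕ) (l : Fin (M+1) → ℕ) :
    (Matrix.of fun i j : Fin (M+1) => ((Nat.choose (l i + j) M : ℕ) : ℚ)).det =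
    ∏ i : Fin (M+1), ∏ j ∈ Finset.Ioi i, (((l i : ℚ) - l j) / ((j : ℕ) - (i : ℕ) : ℚ)) := by
  classical
  let P : Fin (M+1) → Polynomial ℚ := fun j =>
    Polynomial.C (1 / (M.factorial : ℚ)) *
      (descPochhammer ℚ M).comp (Polynomial.X + Polynomial.C ((j : ℕ) : ℚ))
  have hP : ∀ j (k : ℕ), (P j).eval (k : ℚ) = (Nat.choose (k + j) M : ℕ) := by
    intro j k
    simp only [P, Polynomial.eval_mul, Polynomial.eval_C, Polynomial.eval_comp,
      Polynomial.eval_add, Polynomial.eval_X]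
    rw [← Nat.cast_add, descPochhammer_eval_eq_descFactorial, Nat.descFactorial_eq_factorial_mul_choose]
    have := Nat.factorial_ne_zero M
    push_cast
    field_simp
  have hdeg : ∀ j, (P j).natDegree < M + 1 := by
    intro j
    refine Nat.lt_succ_of_le ((Polynomial.natDegree_C_mul_le _ _).trans ?_)
    refine Polynomial.natDegree_comp_le.trans ?_
    rw [Polynomial.natDegree_X_add_C, descPochhammer_natDegree]; simp
  let A : Matrix (Fin (M+1)) (Fin (M+1)) ℚ := Matrix.of fun k j => (P j).coeff k
  have key : ∀ l : Fin (M+1) → ℕ,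
      (Matrix.of fun i j : Fin (M+1) => ((Nat.choose (l i + j) M : ℕ) : ℚ)).det =
      (∏ i : Fin (M+1), ∏ j ∈ Finset.Ioi i, ((l j : ℚ) - l i)) * A.det := by
    intro l
    rw [← Matrix.det_vandermonde, ← Matrix.det_mul]
    congr 1
    ext i j
    rw [Matrix.mul_apply, Matrix.of_apply, ← hP, Polynomial.eval_eq_sum_range' (hdeg j),
      Finset.sum_range]
    simp [A, Matrix.vandermonde_apply, mul_comm]
  have h0 := key (fun i => M - i)
  rw [Matrix.det_of_isUpperTriangular] at h0
  · simp only [Matrix.of_apply] at h0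
    have h1 : ∀ i : Fin (M+1), M - (i : ℕ) + i = M := fun i => by omega
    simp only [h1, Nat.choose_self, Nat.cast_one, Finset.prod_const_one] at h0
    have hneg : ∀ l : Fin (M+1) → ℚ, (∏ i : Fin (M+1), ∏ j ∈ Finset.Ioi i, (l j - l i)) =
      (∏ i : Fin (M+1), ∏ j ∈ Finset.Ioi i, (-1 : ℚ)) *
        ∏ i : Fin (M+1), ∏ j ∈ Finset.Ioi i, (l i - l j) := by
      intro l
      simp only [← Finset.prod_mul_distrib]
      refine Finset.prod_congr rfl fun i _ => Finset.prod_congr rfl fun j _ => by ring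
    rw [key l, hneg (fun i => (l i : ℚ))]
    rw [hneg (fun i => ((M - (i : ℕ) : ℕ) : ℚ))] at h0
    have h2 : (∏ i : Fin (M+1), ∏ j ∈ Finset.Ioi i,
        (((M - (i : ℕ) : ℕ) : ℚ) - ((M - (j : ℕ) : ℕ) : ℚ))) =
        ∏ i : Fin (M+1), ∏ j ∈ Finset.Ioi i, (((j : ℕ) : ℚ) - (i : ℕ)) := by
      refine Finset.prod_congr rfl fun i _ => Finset.prod_congr rfl fun j _ => ?_
      rw [Nat.cast_sub (by omega), Nat.cast_sub (by omega)]; ring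
    rw [h2] at h0
    simp only [Finset.prod_div_distrib]
    have h3 : (∏ i : Fin (M+1), ∏ j ∈ Finset.Ioi i, (((j : ℕ) : ℚ) - (i : ℕ))) ≠ 0 := by
      intro h; rw [h] at h0; simp at h0
    rw [eq_div_iff h3]
    linear_combination (-(∏ i : Fin (M+1), ∏ j ∈ Finset.Ioi i, ((l i : ℚ) - l j))) * h0
  · intro i j hij
    simp only [id] at hij
    rw [Matrix.of_apply, Nat.choose_eq_zero_of_lt, Nat.cast_zero]
    have : (j : ℕ) < i := hij
    omega

theorem aux_coeff (M n : ℕ) (lam : Fin (M+1) → ℕ) (hsum : ∑ i, lam i = n) :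
    coeff (Finsupp.equivFunOnFinite.symm fun i => lam i + (M - (i : ℕ)))
      ((∏ i : Fin (M+1), ∏ j ∈ Finset.Ioi i, (X i - X j : MvPolynomial (Fin (M+1)) ℚ)) *
      ∑ k ∈ Finset.finsuppAntidiag (Finset.univ : Finset (Fin (M+1))) n,
      ∏ i, ((Nat.choose (M + k i) M : ℕ) : MvPolynomial (Fin (M+1)) ℚ) * X i ^ k i) =
    (Matrix.of fun i j : Fin (M+1) =>
      ((Nat.choose (lam i + (M - (i : ℕ)) + j) M : ℕ) : ℚ)).det := by
  classical
  have hv : (∏ i : Fin (M+1), ∏ j ∈ Finset.Ioi i, (X i - X j : MvPolynomial (Fin (M+1)) ℚ)) =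
      (Matrix.of fun i j : Fin (M+1) => (X i : MvPolynomial (Fin (M+1)) ℚ) ^ (M - (j : ℕ))).det := by
    have := Matrix.det_projVandermonde (R := MvPolynomial (Fin (M+1)) ℚ) (n := M + 1) 1 X
    simp only [Pi.one_apply, one_mul] at this
    rw [← this]
    congr 1
    ext1 i j
    simp [Matrix.projVandermonde_apply, Fin.val_rev]
  rw [hv, ← Matrix.det_transpose, Matrix.det_apply, ← Matrix.det_transpose, Matrix.det_apply,
    Finset.sum_mul, coeff_sum]
  refine Finset.sum_congr rfl fun τ _ => ?_
  rw [smul_mul_assoc]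
  simp only [Units.smul_def, zsmul_eq_mul]
  rw [← map_intCast (C : ℚ →+* MvPolynomial (Fin (M+1)) ℚ), coeff_C_mul]
  congr 1
  simp only [Matrix.transpose_apply, Matrix.of_apply]
  -- monomials
  have h1 : (∏ i, (X i : MvPolynomial (Fin (M+1)) ℚ) ^ (M - ((τ i : Fin (M+1)) : ℕ))) =
      monomial (Finsupp.equivFunOnFinite.symm fun i => M - ((τ i : Fin (M+1)) : ℕ)) 1 := by
    rw [monomial_eq, Finsupp.prod_fintype _ _ (by simp)]
    simp
  have h2 : ∀ k : Fin (M+1) →₀ ℕ, (∏ i, ((Nat.choose (M + k i) M : ℕ) :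
      MvPolynomial (Fin (M+1)) ℚ) * X i ^ k i) =
      monomial k (∏ i, (Nat.choose (M + k i) M : ℚ)) := by
    intro k
    rw [monomial_eq, Finsupp.prod_fintype _ _ (by simp), Finset.prod_mul_distrib, map_prod]
    simp
  rw [h1]
  simp only [h2, Finset.mul_sum, monomial_mul, one_mul, coeff_sum, coeff_monomial]
  by_cases hle : ∀ i, M - ((τ i : Fin (M+1)) : ℕ) ≤ lam i + (M - (i : ℕ))
  · let k0 : Fin (M+1) →₀ ℕ := Finsupp.equivFunOnFinite.symm
      fun i => lam i + (M - (i : ℕ)) - (M - ((τ i : Fin (M+1)) : ℕ))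
    rw [Finset.sum_eq_single k0]
    · rw [if_pos]
      · refine Finset.prod_congr rfl fun i _ => ?_
        have := hle i
        simp only [k0, Finsupp.coe_equivFunOnFinite_symm]
        congr 2
        omega
      · ext i
        have := hle i
        simp only [k0, Finsupp.add_apply, Finsupp.coe_equivFunOnFinite_symm]
        omega
    · intro b _ hb
      rw [if_neg]
      intro h
      apply hb
      ext i
      have := DFunLike.congr_fun h i
      simp only [Finsupp.add_apply, Finsupp.coe_equivFunOnFinite_symm] at this
      simp only [k0, Finsupp.coe_equivFunOnFinite_symm]
      omega
    · intro h
      exfalso; apply h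
      simp only [Finset.mem_finsuppAntidiag, Finset.subset_univ, and_true]
      simp only [k0, Finsupp.coe_equivFunOnFinite_symm]
      have e1 : ∑ i, (lam i + (M - (i : ℕ)) - (M - ((τ i : Fin (M+1)) : ℕ))) +
          ∑ i, (M - ((τ i : Fin (M+1)) : ℕ)) = ∑ i : Fin (M+1), (lam i + (M - (i : ℕ))) := by
        rw [← Finset.sum_add_distrib]
        exact Finset.sum_congr rfl fun i _ => Nat.sub_add_cancel (hle i)
      rw [Finset.sum_add_distrib, Equiv.sum_comp τ (fun i : Fin (M+1) => M - (i : ℕ)), hsum] at e1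
      omega
  · push Not at hle
    obtain ⟨i, hi⟩ := hle
    rw [Finset.sum_eq_zero, Finset.prod_eq_zero (Finset.mem_univ i)]
    · rw [Nat.choose_eq_zero_of_lt, Nat.cast_zero]
      omega
    · intro b _
      rw [if_neg]
      intro h
      have := DFunLike.congr_fun h i
      simp only [Finsupp.add_apply, Finsupp.coe_equivFunOnFinite_symm] at this
      omega

theorem aux_pairs (N : ℕ) {R : Type*} [CommMonoid R] (g : Fin N → Fin N → R) :
    ∏ p ∈ Finset.univ.filter (fun p : Fin N × Fin N => p.1 < p.2), g p.1 p.2 =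
    ∏ i : Fin N, ∏ j ∈ Finset.Ioi i, g i j := by
  rw [Finset.prod_filter, Fintype.prod_prod_type]
  refine Finset.prod_congr rfl fun i _ => ?_
  rw [← Finset.prod_filter]
  refine Finset.prod_congr ?_ fun _ _ => rfl
  ext j; simp

/-- Dimension of the irreducible `U(N)`-representation with highest weight `λ`
(a partition of `n` with at most `N` parts, encoded as a weakly decreasing function
`Fin N → ℕ` summing to `n`): by the Weyl dimension formula it equals
`∏_{i<j} (λ_i - λ_j + j - i)/(j-i)`, and the claim is that this equals
`(1/n!)·∑_{σ ∈ S_n} χ^λ(σ)·N^{#σ}` where `χ^λ` is the irreducible character of `S_n`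
indexed by `λ` (given by the Frobenius character formula: `χ^λ(σ)` is the coefficient
of the monomial `x^{λ+δ}` in the product of the Vandermonde polynomial with the
power sums of the cycle type of `σ`), and `#σ` is the number of cycles of `σ`. -/
theorem stmt_10 (N n : ℕ) (hN : 1 ≤ N) (hn : 1 ≤ n)
    (lam : Fin N → ℕ) (hdec : ∀ i j : Fin N, i ≤ j → lam j ≤ lam i)
    (hsum : ∑ i, lam i = n) :
    let delta : Fin N → ℕ := fun i => N - 1 - (i : ℕ)
    let pairs := Finset.univ.filter fun p : Fin N × Fin N => p.1 < p.2
    let vand : MvPolynomial (Fin N) ℚ := ∏ p ∈ pairs, (X p.1 - X p.2)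
    let psum : ℕ → MvPolynomial (Fin N) ℚ := fun k => ∑ i, X i ^ k
    let fullCycleType : Equiv.Perm (Fin n) → Multiset ℕ := fun σ =>
      σ.cycleType + Multiset.replicate (n - σ.cycleType.sum) 1
    let chi : Equiv.Perm (Fin n) → ℚ := fun σ =>
      coeff (Finsupp.equivFunOnFinite.symm fun i => lam i + delta i)
        (vand * ((fullCycleType σ).map psum).prod)
    let numCycles : Equiv.Perm (Fin n) → ℕ := fun σ =>
      σ.cycleType.card + (n - σ.cycleType.sum)
    (1 / (n.factorial : ℚ)) * ∑ σ : Equiv.Perm (Fin n), chi σ * (N : ℚ) ^ numCycles σ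
      = ∏ p ∈ pairs,
        (((lam p.1 : ℚ) - (lam p.2 : ℚ) + ((p.2 : ℕ) : ℚ) - ((p.1 : ℕ) : ℚ)) /
          (((p.2 : ℕ) : ℚ) - ((p.1 : ℕ) : ℚ))) := by
  intro delta pairs vand psum fullCycleType chi numCycles
  obtain ⟨M, rfl⟩ : ∃ M, N = M + 1 := ⟨N - 1, by omega⟩
  have hvand : vand = ∏ i : Fin (M+1), ∏ j ∈ Finset.Ioi i, (X i - X j) :=
    aux_pairs (M+1) (fun i j => (X i - X j : MvPolynomial (Fin (M+1)) ℚ))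
  have hd : ∀ i, delta i = M - (i : ℕ) := fun i => by simp [delta]
  have hterm : ∀ σ : Equiv.Perm (Fin n), chi σ * ((M + 1 : ℕ) : ℚ) ^ numCycles σ =
      coeff (Finsupp.equivFunOnFinite.symm fun i => lam i + (M - (i : ℕ)))
        (vand * ((fullCycleType σ).map (fun k => ∑ i : Fin (M+1) × Fin (M+1),
          (X i.1 : MvPolynomial (Fin (M+1)) ℚ) ^ k)).prod) := by
    intro σ
    have e1 : (fun k => ∑ i : Fin (M+1) × Fin (M+1), (X i.1 : MvPolynomial (Fin (M+1)) ℚ) ^ k) =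
        fun k => C ((M + 1 : ℕ) : ℚ) * psum k := by
      funext k
      rw [Fintype.sum_prod_type]
      simp [psum, Finset.mul_sum]
    have e2 : (fullCycleType σ).card = numCycles σ := by simp [fullCycleType, numCycles]
    rw [e1, Multiset.prod_map_mul, Multiset.map_const', Multiset.prod_replicate, e2,
      ← map_pow, mul_left_comm, coeff_C_mul, mul_comm]
    simp only [chi, hd]
  rw [Finset.sum_congr rfl fun σ _ => hterm σ, ← coeff_sum, ← Finset.mul_sum,
    aux_sum_perm n (fun i : Fin (M+1) × Fin (M+1) => (X i.1 : MvPolynomial (Fin (M+1)) ℚ)),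
    aux_h, hvand, mul_left_comm, ← map_natCast (C : ℚ →+* MvPolynomial (Fin (M+1)) ℚ),
    coeff_C_mul, aux_coeff M n lam hsum, ← mul_assoc, one_div_mul_cancel
      (by exact_mod_cast Nat.factorial_ne_zero n), one_mul, aux_det]
  refine Eq.trans ?_ (aux_pairs (M+1) (fun i j => (((lam i : ℚ) - (lam j : ℚ) + ((j : ℕ) : ℚ)
    - ((i : ℕ) : ℚ)) / (((j : ℕ) : ℚ) - ((i : ℕ) : ℚ))))).symm
  refine Finset.prod_congr rfl fun i _ => Finset.prod_congr rfl fun j _ => ?_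
  push_cast [Nat.cast_sub (show (i : ℕ) ≤ M by omega), Nat.cast_sub (show (j : ℕ) ≤ M by omega)]
  congr 1
  ring
end

section
/- Under the Hall/Haar orthogonality: for partitions λ, μ with |λ| ≤ N, the power-sum functions p_λ(U) = ∏_i Tr(U^{λ_i}) on the unitary group U(N) satisfy ∫_{U(N)} p_λ(U)·conj(p_μ(U)) dU = δ_{λ,μ}·z_λ, where z_λ = ∏_{i ≥ 1} i^{m_i(λ)}·m_i(λ)! and m_i(λ) is the number of parts of λ equal to i. -/
open MeasureTheory

namespace Loop

set_option linter.unusedSectionVars false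

abbrev UG (N : ℕ) := Matrix.unitaryGroup (Fin N) ℂ
abbrev MM (N : ℕ) := Matrix (Fin N) (Fin N) ℂ

structure DD {N : ℕ} (f : UG N → ℂ) (f' : UG N → MM N → ℂ) : Prop where
  cont : Continuous f
  cont' : ∀ A, Continuous (fun U => f' U A)
  add : ∀ U A B, f' U (A + B) = f' U A + f' U B
  smul : ∀ U (c : ℂ) A, f' U (c • A) = c * f' U A
  der : ∀ A : MM N, star A = -A → ∀ g : ℝ → UG N,
    (∀ t i j, HasDerivAt (fun t => (g t : MM N) i j) ((A * (g t : MM N)) i j) t) →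
    ∀ t, HasDerivAt (fun t => f (g t)) (f' (g t) A) t

variable {N : ℕ}

theorem DD.congr {f g : UG N → ℂ} {f' g' : UG N → MM N → ℂ} (h : DD f f')
    (h1 : ∀ U, f U = g U) (h2 : ∀ U A, f' U A = g' U A) : DD g g' := by
  obtain rfl : f = g := funext h1
  obtain rfl : f' = g' := funext fun U => funext (h2 U)
  exact h

theorem DD.const (c : ℂ) : DD (N := N) (fun _ => c) (fun _ _ => 0) where
  cont := continuous_const
  cont' _ := continuous_const
  add := by simp
  smul := by simp
  der _ _ _ _ t := hasDerivAt_const t c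

theorem DD.mul {f g : UG N → ℂ} {f' g' : UG N → MM N → ℂ} (hf : DD f f') (hg : DD g g') :
    DD (fun U => f U * g U) (fun U A => f' U A * g U + f U * g' U A) where
  cont := hf.cont.mul hg.cont
  cont' A := ((hf.cont' A).mul hg.cont).add (hf.cont.mul (hg.cont' A))
  add U A B := by rw [hf.add, hg.add]; ring
  smul U c A := by rw [hf.smul, hg.smul]; ring
  der A hA γ hγ t := (hf.der A hA γ hγ t).mul (hg.der A hA γ hγ t)

theorem DD.sum {ι : Type*} (s : Finset ι) {f : ι → UG N → ℂ} {f' : ι → UG N → MM N → ℂ}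
    (h : ∀ i, DD (f i) (f' i)) :
    DD (fun U => ∑ i ∈ s, f i U) (fun U A => ∑ i ∈ s, f' i U A) where
  cont := continuous_finsetSum _ fun i _ => (h i).cont
  cont' A := continuous_finsetSum _ fun i _ => (h i).cont' A
  add U A B := by simp [(h _).add, Finset.sum_add_distrib]
  smul U c A := by simp [(h _).smul, Finset.mul_sum]
  der A hA γ hγ t := HasDerivAt.fun_sum fun i _ => (h i).der A hA γ hγ t

theorem DD.conj {f : UG N → ℂ} {f' f'' : UG N → MM N → ℂ} (hf : DD f f')
    (hc : ∀ A, Continuous (fun U => f'' U A))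
    (ha : ∀ U A B, f'' U (A + B) = f'' U A + f'' U B)
    (hs : ∀ U (c : ℂ) A, f'' U (c • A) = c * f'' U A)
    (hh : ∀ A : MM N, star A = -A → ∀ U, f'' U A = (starRingEnd ℂ) (f' U A)) :
    DD (fun U => (starRingEnd ℂ) (f U)) f'' where
  cont := Complex.continuous_conj.comp hf.cont
  cont' := hc
  add := ha
  smul := hs
  der A hA γ hγ t := by
    rw [hh A hA]
    exact (hf.der A hA γ hγ t).star

theorem cont_coe : Continuous (fun U : UG N => (U : MM N)) := continuous_subtype_val

theorem DD.entry (i j : Fin N) : DD (fun U : UG N => (U : MM N) i j) (fun U A => (A * (U : MM N)) i j) where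
  cont := cont_coe.matrix_elem i j
  cont' A := (continuous_const.matrix_mul cont_coe).matrix_elem i j
  add U A B := by simp [add_mul]
  smul U c A := by simp
  der A hA γ hγ t := hγ t i j

theorem DD.powEntry (k : ℕ) (i j : Fin N) :
    DD (fun U : UG N => ((U : MM N) ^ k) i j)
      (fun U A => ∑ l ∈ Finset.range k, ((U : MM N) ^ l * A * (U : MM N) ^ (k - l)) i j) := by
  induction k generalizing i j with
  | zero => simpa using DD.const (N := N) ((1 : MM N) i j)
  | succ k ih =>
    refine (DD.sum Finset.univ fun m => (ih i m).mul (DD.entry m j)).congr ?_ ?_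
    · intro U; rw [pow_succ, Matrix.mul_apply]
    · intro U A
      rw [Finset.sum_add_distrib, Finset.sum_range_succ]
      congr 1
      · simp_rw [Finset.sum_mul]
        rw [Finset.sum_comm]
        refine Finset.sum_congr rfl fun l hl => ?_
        rw [← Matrix.mul_apply]
        have : k + 1 - l = (k - l) + 1 := by have := Finset.mem_range.1 hl; omega
        rw [this, pow_succ]; simp only [mul_assoc]
      · rw [← Matrix.mul_apply]; simp [mul_assoc]

theorem DD.tr (k : ℕ) :
    DD (fun U : UG N => Matrix.trace ((U : MM N) ^ k))
      (fun U A => (k : ℂ) * Matrix.trace (A * (U : MM N) ^ k)) := by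
  refine (DD.sum Finset.univ fun i => DD.powEntry k i i).congr (fun U => rfl) fun U A => ?_
  rw [Finset.sum_comm]
  have : ∀ l ∈ Finset.range k, ∑ i, ((U : MM N) ^ l * A * (U : MM N) ^ (k - l)) i i
      = Matrix.trace (A * (U : MM N) ^ k) := by
    intro l hl
    change Matrix.trace ((U : MM N) ^ l * A * (U : MM N) ^ (k - l)) = _
    rw [Matrix.trace_mul_comm, ← mul_assoc, ← pow_add, Matrix.trace_mul_comm]
    congr 3
    have := Finset.mem_range.1 hl; omega
  rw [Finset.sum_congr rfl this]; simp

theorem DD.trc (k : ℕ) :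
    DD (fun U : UG N => (starRingEnd ℂ) (Matrix.trace ((U : MM N) ^ k)))
      (fun U A => -((k : ℂ) * Matrix.trace (A * (star (U : MM N)) ^ k))) := by
  refine (DD.tr k).conj ?_ ?_ ?_ ?_
  · intro A
    refine (continuous_const.mul (Continuous.matrix_trace ?_)).neg
    exact continuous_const.matrix_mul (cont_coe.star.pow k)
  · intro U A B; simp only [add_mul, Matrix.trace_add]; ring
  · intro U c A; simp only [Matrix.smul_mul, Matrix.trace_smul, smul_eq_mul]; ring
  · intro A hA U
    rw [map_mul, Complex.conj_natCast, starRingEnd_apply, ← Matrix.trace_conjTranspose,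
      Matrix.conjTranspose_mul, ← Matrix.star_eq_conjTranspose, ← Matrix.star_eq_conjTranspose, hA,
      star_pow, Matrix.trace_mul_comm]
    simp

/-- Leibniz rule for multiset products. -/
theorem DD.mprod {f : ℕ → UG N → ℂ} {f' : ℕ → UG N → MM N → ℂ} (h : ∀ i, DD (f i) (f' i))
    (s : Multiset ℕ) :
    DD (fun U => (s.map fun i : ℕ => f i U).prod)
      (fun U A => (s.map fun i : ℕ => f' i U A * ((s.erase i).map fun j => f j U).prod).sum) := by
  induction s using Multiset.induction with
  | empty => simpa using DD.const (N := N) 1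
  | cons a s ih =>
    refine ((h a).mul ih).congr (by simp) fun U A => ?_
    simp only [Multiset.map_cons, Multiset.sum_cons, Multiset.erase_cons_head]
    congr 1
    rw [← Multiset.sum_map_mul_left]
    congr 1
    refine Multiset.map_congr rfl fun i hi => ?_
    by_cases hia : i = a
    · subst hia
      rw [Multiset.erase_cons_head]
      conv_rhs => rw [← Multiset.cons_erase hi]
      simp only [Multiset.map_cons, Multiset.prod_cons]; ring
    · rw [Multiset.erase_cons_tail _ (fun h => hia h.symm)]
      simp only [Multiset.map_cons, Multiset.prod_cons]; ring

instance : CompactSpace (UG N) := by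
  refine (isCompact_iff_compactSpace (s := (Matrix.unitaryGroup (Fin N) ℂ : Set (MM N)))).mp ?_
  have hK : IsCompact (Set.pi Set.univ fun _ : Fin N => Set.pi Set.univ fun _ : Fin N =>
      Metric.closedBall (0 : ℂ) 1) :=
    isCompact_univ_pi fun _ => isCompact_univ_pi fun _ => isCompact_closedBall _ _
  refine IsCompact.of_isClosed_subset (s := {U : MM N | ∀ i j, U i j ∈ Metric.closedBall (0:ℂ) 1}) ?_ ?_ ?_
  · have : {U : MM N | ∀ i j, U i j ∈ Metric.closedBall (0:ℂ) 1} =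
        (Set.pi Set.univ fun _ : Fin N => Set.pi Set.univ fun _ : Fin N =>
          Metric.closedBall (0 : ℂ) 1) := by
      ext U
      exact ⟨fun h i _ j _ => h i j, fun h i j => h i trivial j trivial⟩
    rw [this]
    exact hK
  · have : ((Matrix.unitaryGroup (Fin N) ℂ : Set (MM N))) = {U | star U * U = 1} := by
      ext U; exact Matrix.mem_unitaryGroup_iff'
    rw [this]
    exact isClosed_eq (by fun_prop) continuous_const
  · intro U hU i j
    simpa using entry_norm_bound_of_unitary hU i j

section expo
attribute [local instance] Matrix.linftyOpNormedRing Matrix.linftyOpNormedAlgebra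

theorem exists_path (A : MM N) (hA : star A = -A) : ∃ e : ℝ → UG N, e 0 = 1 ∧
    ∀ t (U : UG N) i j, HasDerivAt (fun t => ((e t * U : UG N) : MM N) i j)
      ((A * ((e t * U : UG N) : MM N)) i j) t := by
  have hu : ∀ t : ℝ, NormedSpace.exp (t • A) ∈ Matrix.unitaryGroup (Fin N) ℂ := by
    intro t
    rw [Matrix.mem_unitaryGroup_iff', Matrix.star_eq_conjTranspose, ← Matrix.exp_conjTranspose,
      ← Matrix.star_eq_conjTranspose, star_smul, hA, star_trivial, smul_neg,
      ← Matrix.exp_add_of_commute _ _ (Commute.neg_left (Commute.refl (t • A))), neg_add_cancel,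
      NormedSpace.exp_zero]
  refine ⟨fun t => ⟨NormedSpace.exp (t • A), hu t⟩, ?_, ?_⟩
  · ext1; simp
  · intro t U i j
    have h := (hasDerivAt_exp_smul_const' (𝕂 := ℝ) A t).mul_const (U : MM N)
    have h2 := (Matrix.entryLinearMap ℝ ℂ i j).toContinuousLinearMap.hasFDerivAt.comp_hasDerivAt t h
    rw [mul_assoc] at h2
    exact h2
end expo

variable [MeasurableSpace (UG N)] [BorelSpace (UG N)]
    (μ : Measure (UG N)) [μ.IsHaarMeasure]

theorem integ {f : UG N → ℂ} (hf : Continuous f) : Integrable f μ :=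
  hf.integrable_of_hasCompactSupport (HasCompactSupport.of_compactSpace f)

variable [IsProbabilityMeasure μ]

theorem DD.int_skew {f : UG N → ℂ} {f' : UG N → MM N → ℂ} (h : DD f f') (A : MM N)
    (hA : star A = -A) : ∫ U, f' U A ∂μ = 0 := by
  obtain ⟨e, he0, he⟩ := exists_path A hA
  obtain ⟨C, hC⟩ := isCompact_univ.exists_bound_of_continuousOn (h.cont' A).continuousOn
  have key := hasDerivAt_integral_of_dominated_loc_of_deriv_le (μ := μ) (𝕜 := ℝ) (x₀ := 0)
    (s := Set.univ) (bound := fun _ => C) (F := fun t U => f (e t * U))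
    (F' := fun t U => f' (e t * U) A) Filter.univ_mem
    (Filter.Eventually.of_forall fun t =>
      (integ μ (h.cont.comp (continuous_const.mul continuous_id))).aestronglyMeasurable)
    (integ μ (h.cont.comp (continuous_const.mul continuous_id)))
    (integ μ ((h.cont' A).comp (continuous_const.mul continuous_id))).aestronglyMeasurable
    (Filter.Eventually.of_forall fun U t _ => hC _ trivial)
    (integrable_const C)
    (Filter.Eventually.of_forall fun U t _ => h.der A hA (fun t => e t * U) (fun t => he t U) t)
  have k2 := key.2
  simp only [integral_mul_left_eq_self f, he0, one_mul] at k2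
  exact k2.unique (hasDerivAt_const _ _)

theorem DD.int {f : UG N → ℂ} {f' : UG N → MM N → ℂ} (h : DD f f') (A : MM N) :
    ∫ U, f' U A ∂μ = 0 := by
  have h1 := h.int_skew μ (A - star A) (by simp)
  have h2 := h.int_skew μ (Complex.I • (A + star A)) (by simp [star_smul, add_comm])
  have hA : A = (1/2 : ℂ) • (A - star A) + (-Complex.I/2) • (Complex.I • (A + star A)) := by
    rw [smul_smul, show -Complex.I/2 * Complex.I = 1/2 by
      rw [div_mul_eq_mul_div, neg_mul, Complex.I_mul_I]; norm_num, ← smul_add]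
    rw [show A - star A + (A + star A) = (2:ℂ) • A by rw [two_smul]; abel, smul_smul]; norm_num
  rw [hA]
  simp only [h.add, h.smul (c := 1/2), h.smul (c := -Complex.I/2)]
  rw [integral_add ((integ μ (h.cont' _)).const_mul _) ((integ μ (h.cont' _)).const_mul _),
    integral_const_mul, integral_const_mul, h1, h2]
  simp

section loop

noncomputable def P (s : Multiset ℕ) (U : UG N) : ℂ := (s.map fun k => Matrix.trace ((U : MM N) ^ k)).prod
noncomputable def Q (s : Multiset ℕ) (U : UG N) : ℂ := (starRingEnd ℂ) (P s U)

theorem Q_eq (s : Multiset ℕ) (U : UG N) :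
    Q s U = (s.map fun k => (starRingEnd ℂ) (Matrix.trace ((U : MM N) ^ k))).prod := by
  rw [Q, P, map_multiset_prod, Multiset.map_map]; rfl

theorem P_cons (k : ℕ) (s : Multiset ℕ) (U : UG N) :
    P (k ::ₘ s) U = Matrix.trace ((U : MM N) ^ k) * P s U := by simp [P]

theorem Q_cons (k : ℕ) (s : Multiset ℕ) (U : UG N) :
    Q (k ::ₘ s) U = Matrix.trace ((star (U : MM N)) ^ k) * Q s U := by
  rw [Q, P_cons, map_mul, starRingEnd_apply, ← Matrix.trace_conjTranspose,
    ← Matrix.star_eq_conjTranspose, star_pow]; rfl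

theorem DP (s : Multiset ℕ) : DD (N := N) (P s) (fun U A =>
    (s.map fun i : ℕ => ((i : ℂ) * P (s.erase i) U) * Matrix.trace (A * (U : MM N) ^ i)).sum) :=
  (DD.mprod (fun i => DD.tr i) s).congr (fun U => rfl) fun U A => by
    congr 1; refine Multiset.map_congr rfl fun i _ => ?_
    simp only [P]; ring

theorem DQ (s : Multiset ℕ) : DD (N := N) (Q s) (fun U A =>
    (s.map fun i : ℕ => (-((i : ℂ) * Q (s.erase i) U)) * Matrix.trace (A * (star (U : MM N)) ^ i)).sum) :=
  (DD.mprod (fun i => DD.trc i) s).congr (fun U => (Q_eq s U).symm) fun U A => by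
    congr 1; refine Multiset.map_congr rfl fun i _ => ?_
    simp only [Q_eq]; ring

theorem contP (s : Multiset ℕ) : Continuous (P (N := N) s) := (DP s).cont
theorem contQ (s : Multiset ℕ) : Continuous (Q (N := N) s) := (DQ s).cont

theorem sum_single (M X : MM N) :
    ∑ a, ∑ b, M a b * Matrix.trace (Matrix.single a b 1 * X) = Matrix.trace (M * X) := by
  simp [Matrix.trace, Matrix.mul_apply, Matrix.single_apply, Finset.sum_ite_eq, ite_and]

theorem sum_single_multiset (M : MM N) (s : Multiset ℕ) (c : ℕ → ℂ) (X : ℕ → MM N) :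
    ∑ a, ∑ b, M a b * (s.map fun i : ℕ => c i * Matrix.trace (Matrix.single a b 1 * X i)).sum
      = (s.map fun i : ℕ => c i * Matrix.trace (M * X i)).sum := by
  induction s using Multiset.induction with
  | empty => simp
  | cons i s ih =>
    simp only [Multiset.map_cons, Multiset.sum_cons, mul_add, Finset.sum_add_distrib, ih]
    rw [← sum_single M (X i), Finset.mul_sum]
    congr 1
    refine Finset.sum_congr rfl fun a _ => ?_
    rw [Finset.mul_sum]
    exact Finset.sum_congr rfl fun b _ => by ring

theorem sum_single_pow (U : MM N) (k : ℕ) :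
    ∑ a, ∑ b, ∑ l ∈ Finset.range k, (U ^ l * Matrix.single a b 1 * U ^ (k - l) : MM N) a b
      = ∑ l ∈ Finset.range k, Matrix.trace (U ^ l) * Matrix.trace (U ^ (k - l)) := by
  have h : ∀ (X Y : MM N) a b, (X * Matrix.single a b 1 * Y : MM N) a b = X a a * Y b b := by
    intro X Y a b
    simp [Matrix.mul_apply, Matrix.single_apply, ite_and]
  simp only [h]
  simp_rw [Matrix.trace, Matrix.diag, Finset.sum_mul_sum]
  rw [Finset.sum_comm (s := Finset.range k)]
  refine Finset.sum_congr rfl fun a _ => ?_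
  rw [Finset.sum_comm]

theorem integral_msum (s : Multiset ℕ) (f : ℕ → UG N → ℂ) (hf : ∀ i, Continuous (f i)) :
    ∫ U, (s.map fun i : ℕ => f i U).sum ∂μ = (s.map fun i : ℕ => ∫ U, f i U ∂μ).sum
      ∧ Continuous (fun U => (s.map fun i : ℕ => f i U).sum) := by
  induction s using Multiset.induction with
  | empty => simpa using continuous_const
  | cons a s ih =>
    simp only [Multiset.map_cons, Multiset.sum_cons]
    exact ⟨by rw [integral_add (integ μ (hf a)) (integ μ ih.2), ih.1], (hf a).add ih.2⟩

noncomputable def E (s t : Multiset ℕ) : ℂ := ∫ U, P s U * Q t U ∂μ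

noncomputable def T (k m : ℕ) (s t : Multiset ℕ) : ℂ :=
  ∫ U : UG N, Matrix.trace ((U : MM N) ^ k * (star (U : MM N)) ^ m) * (P s U * Q t U) ∂μ

theorem loop0 (k : ℕ) (s t : Multiset ℕ) :
    ∑ j ∈ Finset.range k, E μ (j ::ₘ (k - j) ::ₘ s) t
      + (s.map fun i : ℕ => (i : ℂ) * E μ ((k + i) ::ₘ s.erase i) t).sum
      = (t.map fun m : ℕ => (m : ℂ) * T μ k m s (t.erase m)).sum := by
  have hD := fun a b => ((DD.powEntry (N := N) k a b).mul ((DP s).mul (DQ t)))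
  have h0 := Finset.sum_eq_zero (s := (Finset.univ : Finset (Fin N))) fun a _ =>
    Finset.sum_eq_zero (s := (Finset.univ : Finset (Fin N))) fun b _ =>
      (hD a b).int μ (Matrix.single a b 1)
  have hc1 : ∀ j, Continuous fun U : UG N => P (j ::ₘ (k - j) ::ₘ s) U * Q t U := fun j =>
    (contP _).mul (contQ _)
  have hc2 : ∀ i : ℕ, Continuous fun U : UG N =>
      (i : ℂ) * (P ((k + i) ::ₘ s.erase i) U * Q t U) := fun i =>
    continuous_const.mul ((contP _).mul (contQ _))
  have hc3 : ∀ m : ℕ, Continuous fun U : UG N =>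
      (m : ℂ) * (Matrix.trace ((U : MM N) ^ k * (star (U : MM N)) ^ m) *
        (P s U * Q (t.erase m) U)) := fun m => by
    refine continuous_const.mul (Continuous.mul (Continuous.matrix_trace ?_)
      ((contP _).mul (contQ _)))
    exact (cont_coe.pow k).matrix_mul (cont_coe.star.pow m)
  have e1 := integral_msum μ s _ hc2
  have e2 := integral_msum μ t _ hc3
  simp only [integral_const_mul] at e1 e2
  unfold E T
  rw [← e1.1, ← e2.1, ← integral_finsetSum _ fun j _ => integ μ (hc1 j),
    ← integral_add (integ μ (continuous_finsetSum _ fun j _ => hc1 j)) (integ μ e1.2), ← sub_eq_zero,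
    ← integral_sub (integ μ (Continuous.fun_add (continuous_finsetSum _ fun j _ => hc1 j) e1.2)) (integ μ e2.2)]
  rw [← h0]
  have hI : ∀ a b, Integrable _ μ := fun a b => integ μ ((hD a b).cont' (Matrix.single a b 1))
  have hI' : ∀ a, Integrable _ μ := fun a => integrable_finsetSum Finset.univ fun b _ => hI a b
  rw [Finset.sum_congr rfl fun a _ => (integral_finsetSum Finset.univ fun b _ => hI a b).symm,
    ← integral_finsetSum Finset.univ fun a _ => hI' a]
  congr 1
  ext U
  simp only [mul_add, Finset.sum_add_distrib, ← mul_assoc, ← Finset.sum_mul]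
  rw [sum_single_pow]
  have r1 := sum_single_multiset ((U : MM N) ^ k) s (fun i => (i : ℂ) * P (s.erase i) U)
    (fun i => (U : MM N) ^ i)
  have r2 := sum_single_multiset ((U : MM N) ^ k) t (fun i => -((i : ℂ) * Q (t.erase i) U))
    (fun i => (star (U : MM N)) ^ i)
  rw [r1]
  simp only [mul_right_comm _ (P s U)]
  simp only [← Finset.sum_mul]
  rw [r2]
  simp only [P_cons, Finset.sum_mul, ← Multiset.sum_map_mul_right]
  rw [sub_eq_add_neg, ← Multiset.sum_map_neg, add_assoc]
  congr 1
  · exact Finset.sum_congr rfl fun j _ => by ring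
  congr 1
  · congr 1; refine Multiset.map_congr rfl fun i _ => ?_
    rw [pow_add]; ring
  · congr 1; refine Multiset.map_congr rfl fun i _ => ?_
    ring

theorem E_nil (t : Multiset ℕ) (ht : ∀ k ∈ t, 0 < k) : E μ 0 t = if t = 0 then 1 else 0 := by
  split_ifs with h
  · subst h; simp [E, P, Q]
  · have h1 := (DQ (N := N) t).int μ 1
    have h2 : ∀ U : UG N, (t.map fun i : ℕ => (-((i : ℂ) * Q (t.erase i) U)) *
        Matrix.trace ((1 : MM N) * (star (U : MM N)) ^ i)).sum = (-(t.sum : ℂ)) * Q t U := by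
      intro U
      have : ∀ i ∈ t, (-((i : ℂ) * Q (t.erase i) U)) *
        Matrix.trace ((1 : MM N) * (star (U : MM N)) ^ i) = (i : ℂ) * (- Q t U) := by
        intro i hi
        conv_rhs => rw [← Multiset.cons_erase hi, Q_cons]
        rw [one_mul]; ring
      rw [Multiset.map_congr rfl this, Multiset.sum_map_mul_right, Nat.cast_multiset_sum]; ring
    simp only [h2] at h1
    rw [integral_const_mul] at h1
    have hs : (t.sum : ℂ) ≠ 0 := by
      obtain ⟨a, ha⟩ := Multiset.exists_mem_of_ne_zero h
      have := Multiset.single_le_sum (fun _ _ => Nat.zero_le _) a ha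
      have := ht a ha
      exact_mod_cast (by omega : t.sum ≠ 0)
    have := (mul_eq_zero.1 h1).resolve_left (neg_ne_zero.2 hs)
    simpa [E, P] using this

theorem E_zero (s t : Multiset ℕ) : E μ (0 ::ₘ s) t = N * E μ s t := by
  simp only [E, P_cons, pow_zero, Matrix.trace_one, Fintype.card_fin, mul_assoc]
  rw [integral_const_mul]

theorem U_star (U : UG N) : (U : MM N) * star (U : MM N) = 1 := Matrix.mem_unitaryGroup_iff.1 U.2

theorem pow_star (U : UG N) (k : ℕ) : (U : MM N) ^ k * star (U : MM N) ^ k = 1 := by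
  induction k with
  | zero => simp
  | succ k ih => rw [pow_succ, pow_succ', mul_assoc, ← mul_assoc _ (star _), U_star, one_mul, ih]

theorem T_eq (k : ℕ) (s t : Multiset ℕ) : T μ k k s t = N * E μ s t := by
  simp only [T, E, pow_star, Matrix.trace_one, Fintype.card_fin]
  rw [integral_const_mul]

theorem T_lt {k m : ℕ} (h : m < k) (s t : Multiset ℕ) : T μ k m s t = E μ ((k - m) ::ₘ s) t := by
  unfold T E
  congr 1; ext U
  rw [P_cons]
  conv_lhs => rw [show k = (k - m) + m by omega, pow_add, mul_assoc, pow_star, mul_one]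
  ring

theorem T_gt {k m : ℕ} (h : k < m) (s t : Multiset ℕ) : T μ k m s t = E μ s ((m - k) ::ₘ t) := by
  unfold T E
  congr 1; ext U
  rw [Q_cons]
  conv_lhs => rw [show m = k + (m - k) by omega, pow_add, ← mul_assoc ((U : MM N) ^ k), pow_star, one_mul]
  ring

end loop

section comb

noncomputable def Z (s : Multiset ℕ) : ℂ := ((s.prod : ℕ) : ℂ) * ∏ i ∈ s.toFinset, ((s.count i).factorial : ℂ)

noncomputable def G (s t : Multiset ℕ) : ℂ := if s = t then Z s else 0

theorem G_comm (s t : Multiset ℕ) : G s t = G t s := by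
  unfold G; by_cases h : s = t
  · subst h; rfl
  · rw [if_neg h, if_neg (Ne.symm h)]

theorem Z_cons (m : ℕ) (s : Multiset ℕ) : Z (m ::ₘ s) = m * (s.count m + 1) * Z s := by
  unfold Z
  have h1 : ∏ i ∈ (m ::ₘ s).toFinset, (((m ::ₘ s).count i).factorial : ℂ)
      = (s.count m + 1).factorial * ∏ i ∈ s.toFinset.erase m, ((s.count i).factorial : ℂ) := by
    have hm : m ∈ (m ::ₘ s).toFinset := by simp
    rw [← Finset.mul_prod_erase _ _ hm, Multiset.count_cons_self]
    congr 1
    rw [Multiset.toFinset_cons, Finset.erase_insert_eq_erase]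
    refine Finset.prod_congr rfl fun i hi => ?_
    rw [Multiset.count_cons_of_ne (Finset.ne_of_mem_erase hi)]
  have h2 : ∏ i ∈ s.toFinset, ((s.count i).factorial : ℂ)
      = (s.count m).factorial * ∏ i ∈ s.toFinset.erase m, ((s.count i).factorial : ℂ) := by
    by_cases hm : m ∈ s.toFinset
    · rw [← Finset.mul_prod_erase _ _ hm]
    · rw [Finset.erase_eq_of_notMem hm, Multiset.count_eq_zero_of_notMem (by simpa using hm)]; simp
  rw [h1, h2, Multiset.prod_cons, Nat.factorial_succ]; push_cast; ring

theorem G_cons (m : ℕ) (s t : Multiset ℕ) :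
    G (m ::ₘ s) t = (t.map fun x : ℕ => if x = m then (x : ℂ) * G s (t.erase x) else 0).sum := by
  have h : (t.map fun x : ℕ => if x = m then (x : ℂ) * G s (t.erase x) else 0)
      = t.map fun x : ℕ => if x = m then (m : ℂ) * G s (t.erase m) else 0 :=
    Multiset.map_congr rfl fun x _ => by split_ifs with h <;> simp [h]
  have h2 : ∀ (u : Multiset ℕ) (c : ℂ), (u.map fun x : ℕ => if x = m then c else 0).sum = u.count m * c := by
    intro u c
    induction u using Multiset.induction with
    | empty => simp
    | cons a u ih =>
      simp only [Multiset.map_cons, Multiset.sum_cons, ih, Multiset.count_cons]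
      by_cases h : a = m
      · subst h; simp; ring
      · simp [h, Ne.symm h]
  rw [h, h2]
  by_cases hm : m ∈ t
  · obtain ⟨t, rfl⟩ := Multiset.exists_cons_of_mem hm
    simp only [G, Multiset.erase_cons_head, Multiset.cons_inj_right, Multiset.count_cons_self]
    split_ifs with hst
    · subst hst; rw [Z_cons]; push_cast; ring
    · simp
  · rw [Multiset.count_eq_zero_of_notMem hm, G, if_neg]
    · simp
    · rintro rfl; simp at hm

theorem G_loop (N : ℂ) (k : ℕ) (s t : Multiset ℕ) (hs : ∀ i ∈ s, 0 < i) (ht : ∀ i ∈ t, 0 < i) :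
    N * G (k ::ₘ s) t + ∑ j ∈ Finset.Ico 1 k, G (j ::ₘ (k - j) ::ₘ s) t
      + (s.map fun i : ℕ => (i : ℂ) * G ((k + i) ::ₘ s.erase i) t).sum
      = (t.map fun m : ℕ => (m : ℂ) * (if m = k then N * G s (t.erase m) else
          if m < k then G ((k - m) ::ₘ s) (t.erase m) else
            G s ((m - k) ::ₘ t.erase m))).sum := by
  have a1 : N * G (k ::ₘ s) t
      = (t.map fun m : ℕ => if m = k then (m : ℂ) * (N * G s (t.erase m)) else 0).sum := by
    rw [G_cons, ← Multiset.sum_map_mul_left]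
    congr 1; refine Multiset.map_congr rfl fun x _ => ?_
    split_ifs <;> ring
  have a2 : ∑ j ∈ Finset.Ico 1 k, G (j ::ₘ (k - j) ::ₘ s) t
      = (t.map fun m : ℕ => if m < k then (m : ℂ) * G ((k - m) ::ₘ s) (t.erase m) else 0).sum := by
    simp_rw [fun j => G_cons j ((k - j) ::ₘ s) t]
    rw [Finset.sum_eq_multiset_sum, Multiset.sum_map_sum_map]
    congr 1; refine Multiset.map_congr rfl fun m hm => ?_
    rw [← Finset.sum_eq_multiset_sum]
    have := ht m hm
    rw [Finset.sum_ite_eq]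
    simp only [Finset.mem_Ico]
    by_cases h : m < k
    · rw [if_pos ⟨this, h⟩, if_pos h, G_cons]
    · rw [if_neg (fun h' => h h'.2), if_neg h]
  have a3 : (s.map fun i : ℕ => (i : ℂ) * G ((k + i) ::ₘ s.erase i) t).sum
      = (t.map fun m : ℕ => if k < m then (m : ℂ) * G s ((m - k) ::ₘ t.erase m) else 0).sum := by
    have : ∀ m ∈ t, (if k < m then (m : ℂ) * G s ((m - k) ::ₘ t.erase m) else 0)
        = (s.map fun i : ℕ => if m = k + i then (i : ℂ) * (m * G (s.erase i) (t.erase m)) else 0).sum := by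
      intro m _
      split_ifs with h
      · rw [G_comm, G_cons, ← Multiset.sum_map_mul_left]
        congr 1; refine Multiset.map_congr rfl fun i _ => ?_
        rw [G_comm]
        by_cases h' : i = m - k
        · rw [if_pos h', if_pos (by omega)]; ring
        · rw [if_neg h', if_neg (by omega)]; ring
      · symm
        refine Multiset.sum_eq_zero fun x hx => ?_
        obtain ⟨i, hi, rfl⟩ := Multiset.mem_map.1 hx
        have := hs i hi
        rw [if_neg (by omega)]
    rw [Multiset.map_congr rfl this, Multiset.sum_map_sum_map]
    congr 1; refine Multiset.map_congr rfl fun i _ => ?_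
    rw [G_cons, ← Multiset.sum_map_mul_left]
    congr 1; refine Multiset.map_congr rfl fun m _ => ?_
    split_ifs <;> ring
  rw [a1, a2, a3, ← Multiset.sum_map_add, ← Multiset.sum_map_add]
  congr 1; refine Multiset.map_congr rfl fun m _ => ?_
  rcases lt_trichotomy m k with h | h | h
  · simp [h, h.ne, h.not_gt]
  · simp [h]
  · simp [h, h.ne', h.not_gt]
end comb

theorem loop1 {N : ℕ} [MeasurableSpace (UG N)] [BorelSpace (UG N)]
    (μ : Measure (UG N)) [μ.IsHaarMeasure] [IsProbabilityMeasure μ]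
    (k : ℕ) (hk : 0 < k) (s t : Multiset ℕ) :
    N * E μ (k ::ₘ s) t + ∑ j ∈ Finset.Ico 1 k, E μ (j ::ₘ (k - j) ::ₘ s) t
      + (s.map fun i : ℕ => (i : ℂ) * E μ ((k + i) ::ₘ s.erase i) t).sum
      = (t.map fun m : ℕ => (m : ℂ) * (if m = k then N * E μ s (t.erase m) else
          if m < k then E μ ((k - m) ::ₘ s) (t.erase m) else
            E μ s ((m - k) ::ₘ t.erase m))).sum := by
  have h := loop0 μ k s t
  rw [Finset.range_eq_Ico, Finset.sum_eq_sum_Ico_succ_bot hk, E_zero] at h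
  rw [show N * E μ (k ::ₘ s) t + ∑ j ∈ Finset.Ico 1 k, E μ (j ::ₘ (k - j) ::ₘ s) t
    + (s.map fun i : ℕ => (i : ℂ) * E μ ((k + i) ::ₘ s.erase i) t).sum = _ from h]
  congr 1; refine Multiset.map_congr rfl fun m _ => ?_
  rcases lt_trichotomy m k with h | h | h
  · rw [if_neg h.ne, if_pos h, T_lt μ h]
  · subst h; rw [if_pos rfl, T_eq]
  · rw [if_neg h.ne', if_neg h.not_gt, T_gt μ h]

theorem norm_msum_le (s : Multiset ℕ) (f : ℕ → ℂ) (M : ℝ) (h : ∀ i ∈ s, ‖f i‖ ≤ M) :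
    ‖(s.map fun i : ℕ => (i : ℂ) * f i).sum‖ ≤ s.sum * M := by
  induction s using Multiset.induction with
  | empty => simp
  | cons a s ih =>
    simp only [Multiset.map_cons, Multiset.sum_cons]
    refine (norm_add_le _ _).trans ?_
    have h1 := ih fun i hi => h i (Multiset.mem_cons_of_mem hi)
    have h2 := h a (Multiset.mem_cons_self _ _)
    rw [norm_mul, Complex.norm_natCast]
    have := mul_le_mul_of_nonneg_left h2 (Nat.cast_nonneg (α := ℝ) a)
    rw [Nat.cast_add, add_mul]; linarith

theorem main {N : ℕ} [MeasurableSpace (UG N)] [BorelSpace (UG N)]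
    (μ : Measure (UG N)) [μ.IsHaarMeasure] [IsProbabilityMeasure μ] (n : ℕ) :
    n ≤ N → ∀ s t : Multiset ℕ, s.sum = n → (∀ i ∈ s, 0 < i) → (∀ i ∈ t, 0 < i) →
      E μ s t = G s t := by
  induction n using Nat.strong_induction_on with
  | _ n IH =>
  intro hn s t hsn hs ht
  rcases Nat.eq_zero_or_pos n with h0 | hpos
  · have : s = 0 := by
      by_contra h
      obtain ⟨a, ha⟩ := Multiset.exists_mem_of_ne_zero h
      have := Multiset.single_le_sum (fun _ _ => Nat.zero_le _) a ha
      have := hs a ha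
      omega
    subst this
    rw [E_nil μ t ht, G]
    by_cases h : t = 0
    · subst h; simp [Z]
    · rw [if_neg h, if_neg (Ne.symm h)]
  let d : Multiset ℕ → ℂ := fun s => E μ s t - G s t
  obtain ⟨p, hp⟩ := Finite.exists_max (fun p : n.Partition => ‖d p.parts‖)
  have hmax : ∀ u : Multiset ℕ, u.sum = n → (∀ i ∈ u, 0 < i) → ‖d u‖ ≤ ‖d p.parts‖ := by
    intro u hu hu'
    exact hp ⟨u, fun {i} hi => hu' i hi, hu⟩
  have hpn : p.parts ≠ 0 := by
    intro h
    have := p.parts_sum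
    rw [h] at this; simp at this; omega
  obtain ⟨k, hk⟩ := Multiset.exists_mem_of_ne_zero hpn
  obtain ⟨r, hr⟩ := Multiset.exists_cons_of_mem hk
  have hk0 : 0 < k := p.parts_pos hk
  have hr0 : ∀ i ∈ r, 0 < i := fun i hi => p.parts_pos (by rw [hr]; exact Multiset.mem_cons_of_mem hi)
  have hsum : k + r.sum = n := by rw [← p.parts_sum, hr, Multiset.sum_cons]
  have L1 := loop1 μ k hk0 r t
  have L2 := G_loop N k r t hr0 ht
  have hR : (t.map fun m : ℕ => (m : ℂ) * (if m = k then N * E μ r (t.erase m) else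
          if m < k then E μ ((k - m) ::ₘ r) (t.erase m) else
            E μ r ((m - k) ::ₘ t.erase m))).sum
      = (t.map fun m : ℕ => (m : ℂ) * (if m = k then (N : ℂ) * G r (t.erase m) else
          if m < k then G ((k - m) ::ₘ r) (t.erase m) else
            G r ((m - k) ::ₘ t.erase m))).sum := by
    congr 1; refine Multiset.map_congr rfl fun m hm => ?_
    have hm0 := ht m hm
    have het : ∀ i ∈ t.erase m, 0 < i := fun i hi => ht i (Multiset.mem_of_mem_erase hi)
    split_ifs with h1 h2
    · rw [IH r.sum (by omega) (by omega) r _ rfl hr0 het]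
    · rw [IH (k - m + r.sum) (by omega) (by omega) ((k - m) ::ₘ r) _ (by simp) ?_ het]
      intro i hi
      rcases Multiset.mem_cons.1 hi with rfl | hi
      · omega
      · exact hr0 i hi
    · rw [IH r.sum (by omega) (by omega) r _ rfl hr0 ?_]
      intro i hi
      rcases Multiset.mem_cons.1 hi with rfl | hi
      · omega
      · exact het i hi
  rw [hR, ← L2] at L1
  have hD : (N : ℂ) * d p.parts = -(∑ j ∈ Finset.Ico 1 k, d (j ::ₘ (k - j) ::ₘ r)
      + (r.map fun i : ℕ => (i : ℂ) * d ((k + i) ::ₘ r.erase i)).sum) := by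
    rw [hr]
    simp only [d, Finset.sum_sub_distrib, mul_sub, Multiset.sum_map_sub]
    linear_combination L1
  have hb1 : ‖∑ j ∈ Finset.Ico 1 k, d (j ::ₘ (k - j) ::ₘ r)‖ ≤ ((k : ℝ) - 1) * ‖d p.parts‖ := by
    refine (norm_sum_le_of_le _ (f := fun j => d (j ::ₘ (k - j) ::ₘ r))
      (n := fun _ => ‖d p.parts‖) fun j hj => ?_).trans ?_
    · have := Finset.mem_Ico.1 hj
      refine hmax _ (by simp; omega) fun i hi => ?_
      rcases Multiset.mem_cons.1 hi with rfl | hi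
      · omega
      rcases Multiset.mem_cons.1 hi with rfl | hi
      · omega
      exact hr0 i hi
    · simp [Nat.cast_sub (show 1 ≤ k from hk0)]
  have hb2 := norm_msum_le r (fun i => d ((k + i) ::ₘ r.erase i)) ‖d p.parts‖ fun i hi => by
    have h1 : i + (r.erase i).sum = r.sum := by
      conv_rhs => rw [← Multiset.cons_erase hi, Multiset.sum_cons]
    refine hmax _ (by simp; omega) fun j hj => ?_
    rcases Multiset.mem_cons.1 hj with rfl | hj
    · omega
    exact hr0 j (Multiset.mem_of_mem_erase hj)
  have hb : (N : ℝ) * ‖d p.parts‖ ≤ ((n : ℝ) - 1) * ‖d p.parts‖ := by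
    have := congrArg norm hD
    rw [norm_mul, Complex.norm_natCast, norm_neg] at this
    rw [this]
    refine (norm_add_le _ _).trans ((add_le_add hb1 hb2).trans (le_of_eq ?_))
    have hc : (n : ℝ) = k + (r.sum : ℕ) := by rw [← Nat.cast_add, hsum]
    rw [hc]; ring
  have hz : ‖d p.parts‖ ≤ 0 := by
    have : (n : ℝ) ≤ N := by exact_mod_cast hn
    nlinarith [norm_nonneg (d p.parts)]
  have := (hmax s hsn hs).trans hz
  exact sub_eq_zero.1 (norm_le_zero_iff.1 this)

end Loop

/-- Haar orthogonality of power-sum functions on `U(N)`: for partitions `λ, μ`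
(multisets of positive integers) with `|λ| ≤ N`, and `μHaar` the normalized Haar
(probability) measure on the unitary group,
`∫ p_λ(U)·conj(p_μ(U)) dU = δ_{λμ}·z_λ`, where `p_λ(U) = ∏_i Tr(U^{λ_i})` and
`z_λ = ∏_i i^{m_i(λ)}·m_i(λ)! = λ.prod · ∏_{i ∈ λ} m_i(λ)!`. -/
theorem stmt_15 (N : ℕ) (hN : 1 ≤ N)
    [MeasurableSpace (Matrix.unitaryGroup (Fin N) ℂ)]
    [BorelSpace (Matrix.unitaryGroup (Fin N) ℂ)]
    (μHaar : Measure (Matrix.unitaryGroup (Fin N) ℂ))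
    [μHaar.IsHaarMeasure] [IsProbabilityMeasure μHaar]
    (lam mu : Multiset ℕ) (hlam : ∀ k ∈ lam, 0 < k) (hmu : ∀ k ∈ mu, 0 < k)
    (hsize : lam.sum ≤ N) :
    ∫ U, ((lam.map fun k => Matrix.trace ((U : Matrix (Fin N) (Fin N) ℂ) ^ k)).prod
        * (starRingEnd ℂ)
            ((mu.map fun k => Matrix.trace ((U : Matrix (Fin N) (Fin N) ℂ) ^ k)).prod))
        ∂μHaar
      = if lam = mu then
          ((lam.prod : ℕ) : ℂ) * ∏ i ∈ lam.toFinset, ((lam.count i).factorial : ℂ)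
        else 0 := by
  exact Loop.main μHaar lam.sum hsize lam mu rfl hlam hmu
end
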